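/- arXiv:2306.11824 — 3 statements merged into one kernel-verified Lean document; each statement's English description precedes it below -/
import Mathlib

section
/- Let H ∈ (0, 1/2), T > 0, and let ξ : [0,T] → ℝ be measurable and bounded. Set c₁ := 1/(2H Γ(3/2 − H) Γ(H + 1/2)), and define η(t) := ∫₀^t s^{1/2−H} ξ(s) ds and μ(t) := c₁ ∫₀^t (t − s)^{1/2−H} s^{1/2−H} ξ(s) ds for t ∈ [0,T]. Then the function m(t) := c₁ (1/2 − H) ∫₀^t (t − s)^{−H−1/2} s^{1/2−H} ξ(s) ds is well defined and bounded on [0,T], μ is absolutely continuous with μ(t) = ∫₀^t m(s) ds for all t ∈ [0,T], and η(t) = 2H ∫₀^t (t − s)^{H−1/2} m(s) ds for all t ∈ [0,T]. -/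
open MeasureTheory Real

/-- The constant `c₁ = 1 / (2H Γ(3/2 − H) Γ(H + 1/2))`. -/
noncomputable def c₁ (H : ℝ) : ℝ :=
  1 / (2 * H * Real.Gamma (3 / 2 - H) * Real.Gamma (H + 1 / 2))

/-- `η(t) = ∫₀^t s^(1/2−H) ξ(s) ds`. -/
noncomputable def η (H : ℝ) (ξ : ℝ → ℝ) (t : ℝ) : ℝ :=
  ∫ s in Set.Ioc (0 : ℝ) t, s ^ (1 / 2 - H) * ξ s

/-- `μ(t) = c₁ ∫₀^t (t−s)^(1/2−H) s^(1/2−H) ξ(s) ds`. -/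
noncomputable def μfn (H : ℝ) (ξ : ℝ → ℝ) (t : ℝ) : ℝ :=
  c₁ H * ∫ s in Set.Ioc (0 : ℝ) t, (t - s) ^ (1 / 2 - H) * s ^ (1 / 2 - H) * ξ s

/-- `m(t) = c₁ (1/2 − H) ∫₀^t (t−s)^(−H−1/2) s^(1/2−H) ξ(s) ds`. -/
noncomputable def mfn (H : ℝ) (ξ : ℝ → ℝ) (t : ℝ) : ℝ :=
  c₁ H * (1 / 2 - H) * ∫ s in Set.Ioc (0 : ℝ) t, (t - s) ^ (-H - 1 / 2) * s ^ (1 / 2 - H) * ξ s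

open ProbabilityTheory in
/-- Scaled and shifted Beta integral over the reals. -/
lemma beta_shift {a b s t : ℝ} (ha : -1 < a) (hb : -1 < b) (hst : s < t) :
    ∫ u in Set.Ioc s t, (t - u) ^ b * (u - s) ^ a = beta (a + 1) (b + 1) * (t - s) ^ (a + b + 1) := by
  have hL : 0 < t - s := sub_pos.2 hst
  have key : ∫ x in (0 : ℝ)..(t - s), ((t - s) - x) ^ b * x ^ a
      = beta (a + 1) (b + 1) * (t - s) ^ (a + b + 1) := by
    have h := Complex.betaIntegral_scaled ((a + 1 : ℝ) : ℂ) ((b + 1 : ℝ) : ℂ) hL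
    rw [Complex.betaIntegral_eq_Gamma_mul_div _ _ (by simp; linarith) (by simp; linarith)] at h
    have h2 : ∫ x in (0 : ℝ)..(t - s), (x : ℂ) ^ (((a + 1 : ℝ) : ℂ) - 1) *
        (((t - s : ℝ) : ℂ) - x) ^ (((b + 1 : ℝ) : ℂ) - 1)
        = ((∫ x in (0 : ℝ)..(t - s), ((t - s) - x) ^ b * x ^ a : ℝ) : ℂ) := by
      rw [← intervalIntegral.integral_ofReal, intervalIntegral.integral_of_le hL.le,
        intervalIntegral.integral_of_le hL.le]
      refine setIntegral_congr_fun measurableSet_Ioc fun x hx => ?_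
      simp only [Complex.ofReal_mul]
      rw [Complex.ofReal_cpow (by linarith [hx.2]), Complex.ofReal_cpow hx.1.le, mul_comm]
      push_cast
      simp
    rw [h2, ← Complex.ofReal_add, Complex.Gamma_ofReal, Complex.Gamma_ofReal,
      Complex.Gamma_ofReal, ← Complex.ofReal_one, ← Complex.ofReal_sub,
      ← Complex.ofReal_cpow hL.le] at h
    have h3 : ∫ x in (0 : ℝ)..(t - s), ((t - s) - x) ^ b * x ^ a = (t - s) ^ (a + 1 + (b + 1) - 1) *
      (Gamma (a + 1) * Gamma (b + 1) / Gamma (a + 1 + (b + 1))) := by exact_mod_cast h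
    rw [h3, beta, mul_comm]
    ring_nf
  rw [← key, ← intervalIntegral.integral_of_le hst.le]
  have := intervalIntegral.integral_comp_sub_right (a := s) (b := t)
    (fun x => ((t - s) - x) ^ b * x ^ a) s
  simp only [sub_self] at this
  rw [← this]
  refine intervalIntegral.integral_congr fun x _ => ?_
  simp

open ProbabilityTheory in
lemma beta_shift_integrable {a b s t : ℝ} (ha : -1 < a) (hb : -1 < b) (hst : s < t) :
    IntegrableOn (fun u => (t - u) ^ b * (u - s) ^ a) (Set.Ioc s t) := by
  have h := beta_shift ha hb hst
  by_contra hc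
  rw [integral_undef hc] at h
  have h1 := beta_pos (α := a + 1) (β := b + 1) (by linarith) (by linarith)
  have h2 := rpow_pos_of_pos (sub_pos.2 hst) (a + b + 1)
  have := mul_pos h1 h2
  linarith

open ProbabilityTheory in
lemma beta_zero {b : ℝ} (hb : -1 < b) : beta 1 (b + 1) = 1 / (b + 1) := by
  have : 0 < b + 1 := by linarith
  have h := Gamma_pos_of_pos this
  rw [beta, add_comm 1, Gamma_add_one this.ne', Gamma_one]
  field_simp

lemma pow_integrable {b t : ℝ} (hb : -1 < b) (ht : 0 ≤ t) :
    IntegrableOn (fun u => (t - u) ^ b) (Set.Ioc 0 t) := by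
  rcases ht.eq_or_lt with rfl | ht
  · simp
  · simpa using beta_shift_integrable (a := 0) (by norm_num) hb ht

lemma pow_integral {b t : ℝ} (hb : -1 < b) (ht : 0 ≤ t) :
    ∫ u in Set.Ioc 0 t, (t - u) ^ b = t ^ (b + 1) / (b + 1) := by
  rcases ht.eq_or_lt with rfl | ht
  · have : b + 1 ≠ 0 := by linarith
    simp [zero_rpow this]
  · have := beta_shift (a := 0) (by norm_num) hb ht
    simp only [rpow_zero, mul_one, zero_add, beta_zero hb, sub_zero] at this
    rw [this]; ring

open ProbabilityTheory in
lemma fubini_step {a b t G : ℝ} (ha : -1 < a) (ha0 : a ≠ 0) (hb : -1 < b) (hab : -1 < a + b + 1)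
    (ht : 0 ≤ t) (g : ℝ → ℝ) (hg : Measurable g) (hG : ∀ s ∈ Set.Ioc 0 t, |g s| ≤ G) :
    ∫ u in Set.Ioc 0 t, (t - u) ^ b * ∫ s in Set.Ioc 0 u, (u - s) ^ a * g s
      = beta (a + 1) (b + 1) * ∫ s in Set.Ioc 0 t, (t - s) ^ (a + b + 1) * g s := by
  set F : ℝ → ℝ → ℝ := fun s u => (Set.Ioi s).indicator (fun u => (t - u) ^ b * (u - s) ^ a) u * g s
    with hF
  have hFm : Measurable (Function.uncurry F) := by
    have : Function.uncurry F = fun p : ℝ × ℝ =>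
        {p : ℝ × ℝ | p.1 < p.2}.indicator (fun p => (t - p.2) ^ b * (p.2 - p.1) ^ a) p * g p.1 := by
      ext ⟨s, u⟩
      simp [hF, Function.uncurry, Set.indicator]
    rw [this]
    refine Measurable.mul (Measurable.indicator ?_ (measurableSet_lt measurable_fst measurable_snd))
      (by fun_prop)
    fun_prop
  have hinter : ∀ s ∈ Set.Ioc 0 t, Set.Ioi s ∩ Set.Ioc 0 t = Set.Ioc s t := by
    intro s hs; ext u; simp only [Set.mem_inter_iff, Set.mem_Ioi, Set.mem_Ioc]
    constructor
    · rintro ⟨h1, h2, h3⟩; exact ⟨h1, h3⟩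
    · rintro ⟨h1, h2⟩; exact ⟨h1, hs.1.trans h1, h2⟩
  have hval : ∀ s ∈ Set.Ioo 0 t, ∫ u in Set.Ioc 0 t,
      (Set.Ioi s).indicator (fun u => (t - u) ^ b * (u - s) ^ a) u
      = beta (a + 1) (b + 1) * (t - s) ^ (a + b + 1) := by
    intro s hs
    rw [integral_indicator measurableSet_Ioi, Measure.restrict_restrict measurableSet_Ioi,
      hinter s ⟨hs.1, hs.2.le⟩, beta_shift ha hb hs.2]
  have hae : ∀ᵐ s ∂(volume.restrict (Set.Ioc 0 t)), s ∈ Set.Ioo 0 t := by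
    rw [← restrict_Ioo_eq_restrict_Ioc]
    exact ae_restrict_mem measurableSet_Ioo
  have hgi : Integrable (fun s => (t - s) ^ (a + b + 1) * |g s|) (volume.restrict (Set.Ioc 0 t)) := by
    refine Integrable.mul_bdd (c := G) (pow_integrable hab ht) (by fun_prop) ?_
    filter_upwards [ae_restrict_mem measurableSet_Ioc] with s hs
    simpa using hG s hs
  have hint : Integrable (Function.uncurry F)
      ((volume.restrict (Set.Ioc 0 t)).prod (volume.restrict (Set.Ioc 0 t))) := by
    rw [integrable_prod_iff hFm.aestronglyMeasurable]
    constructor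
    · filter_upwards [hae] with s hs
      simp only [Function.uncurry, hF]
      refine Integrable.mul_const ?_ _
      rw [integrable_indicator_iff measurableSet_Ioi, IntegrableOn,
        Measure.restrict_restrict measurableSet_Ioi, hinter s ⟨hs.1, hs.2.le⟩]
      exact beta_shift_integrable ha hb hs.2
    · refine (hgi.const_mul (beta (a + 1) (b + 1))).congr ?_
      filter_upwards [hae] with s hs
      rw [← mul_assoc, ← hval s hs, ← integral_mul_const]
      refine setIntegral_congr_fun measurableSet_Ioc fun u hu => ?_
      simp only [Function.uncurry, hF, norm_mul, Real.norm_eq_abs]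
      congr 1
      rw [abs_of_nonneg]
      refine Set.indicator_apply_nonneg fun h => ?_
      have h1 : 0 ≤ t - u := by linarith [hu.2]
      have h2 : 0 ≤ u - s := by have : s < u := h; linarith
      positivity
  have hswap := integral_integral_swap hint
  have hl : ∫ s in Set.Ioc 0 t, ∫ u in Set.Ioc 0 t, F s u
      = beta (a + 1) (b + 1) * ∫ s in Set.Ioc 0 t, (t - s) ^ (a + b + 1) * g s := by
    rw [← integral_const_mul]
    refine integral_congr_ae ?_
    filter_upwards [hae] with s hs
    simp only [hF]
    rw [integral_mul_const, hval s hs, mul_assoc]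
  rw [← hl, hswap]
  refine setIntegral_congr_fun measurableSet_Ioc fun u hu => ?_
  rw [← integral_const_mul, ← integral_indicator measurableSet_Ioc,
    ← integral_indicator measurableSet_Ioc]
  refine integral_congr_ae (.of_forall fun s => ?_)
  simp only [Set.indicator, hF, Set.mem_Ioc, Set.mem_Ioi]
  rcases lt_trichotomy s u with h | h | h
  · by_cases h0 : 0 < s
    · simp [h0, h, h.le, h.le.trans hu.2, mul_assoc]
    · simp [h0]
  · subst h; simp [zero_rpow ha0]
  · simp [h.not_ge, h.not_gt]

theorem mu_eta_small_hurst
    (H T : ℝ) (hH : H ∈ Set.Ioo (0 : ℝ) (1 / 2)) (hT : 0 < T)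
    (ξ : ℝ → ℝ) (hξmeas : Measurable ξ)
    (hξbdd : ∃ M : ℝ, ∀ t ∈ Set.Icc (0 : ℝ) T, |ξ t| ≤ M) :
    (∀ t ∈ Set.Icc (0 : ℝ) T, IntegrableOn
        (fun s => (t - s) ^ (-H - 1 / 2) * s ^ (1 / 2 - H) * ξ s) (Set.Ioc (0 : ℝ) t) volume) ∧
    (∃ M : ℝ, ∀ t ∈ Set.Icc (0 : ℝ) T, |mfn H ξ t| ≤ M) ∧
    (∀ t ∈ Set.Icc (0 : ℝ) T, μfn H ξ t = ∫ s in Set.Ioc (0 : ℝ) t, mfn H ξ s) ∧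
    (∀ t ∈ Set.Icc (0 : ℝ) T,
      η H ξ t = 2 * H * ∫ s in Set.Ioc (0 : ℝ) t, (t - s) ^ (H - 1 / 2) * mfn H ξ s) := by
  obtain ⟨hH0, hH2⟩ := hH
  obtain ⟨M, hM⟩ := hξbdd
  have hM0 : 0 ≤ M := (abs_nonneg _).trans (hM 0 ⟨le_rfl, hT.le⟩)
  set g : ℝ → ℝ := fun s => s ^ (1 / 2 - H) * ξ s with hg
  have hgm : Measurable g := by fun_prop
  set G : ℝ := T ^ (1 / 2 - H) * M with hGdef
  have hG0 : 0 ≤ G := by positivity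
  have hGb : ∀ s ∈ Set.Icc 0 T, |g s| ≤ G := by
    intro s hs
    rw [hg, abs_mul, abs_of_nonneg (rpow_nonneg hs.1 _)]
    exact mul_le_mul (rpow_le_rpow hs.1 hs.2 (by linarith)) (hM s hs) (abs_nonneg _)
      (by positivity)
  have hGt : ∀ t ∈ Set.Icc 0 T, ∀ s ∈ Set.Ioc 0 t, |g s| ≤ G := fun t ht s hs =>
    hGb s ⟨hs.1.le, hs.2.trans ht.2⟩
  have ha : -1 < -H - 1 / 2 := by linarith
  have hm : ∀ t, mfn H ξ t = c₁ H * (1 / 2 - H) *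
      ∫ s in Set.Ioc (0 : ℝ) t, (t - s) ^ (-H - 1 / 2) * g s := by
    intro t; simp only [mfn, hg, mul_assoc]
  have hg1 := Gamma_pos_of_pos (show 0 < 1 / 2 - H by linarith)
  have hg2 := Gamma_pos_of_pos (show 0 < H + 1 / 2 by linarith)
  have hg3 : Gamma (3 / 2 - H) = (1 / 2 - H) * Gamma (1 / 2 - H) := by
    rw [← Gamma_add_one (by linarith)]; congr 1; ring
  refine ⟨fun t ht => ?_, ?_, fun t ht => ?_, fun t ht => ?_⟩
  · simp only [mul_assoc]
    refine Integrable.mul_bdd (c := G) (pow_integrable ha ht.1) hgm.aestronglyMeasurable ?_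
    filter_upwards [ae_restrict_mem measurableSet_Ioc] with s hs
    exact hGt t ht s hs
  · refine ⟨|c₁ H * (1 / 2 - H)| *
      (T ^ (-H - 1 / 2 + 1) / (-H - 1 / 2 + 1) * G), fun t ht => ?_⟩
    rw [hm, abs_mul]
    refine mul_le_mul_of_nonneg_left ?_ (abs_nonneg _)
    have h1 : |∫ s in Set.Ioc (0 : ℝ) t, (t - s) ^ (-H - 1 / 2) * g s|
        ≤ ∫ s in Set.Ioc (0 : ℝ) t, (t - s) ^ (-H - 1 / 2) * G := by
      rw [← Real.norm_eq_abs]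
      refine norm_integral_le_of_norm_le ((pow_integrable ha ht.1).mul_const G) ?_
      filter_upwards [ae_restrict_mem measurableSet_Ioc] with s hs
      have h0 : 0 ≤ (t - s) ^ (-H - 1 / 2) := rpow_nonneg (by linarith [hs.2]) _
      rw [norm_mul, Real.norm_eq_abs, Real.norm_eq_abs, abs_of_nonneg h0]
      exact mul_le_mul_of_nonneg_left (hGt t ht s hs) h0
    refine h1.trans ?_
    rw [integral_mul_const, pow_integral ha ht.1]
    refine mul_le_mul_of_nonneg_right ?_ hG0
    exact div_le_div_of_nonneg_right (rpow_le_rpow ht.1 ht.2 (by linarith)) (by linarith)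
  · have h := fubini_step (b := 0) ha (by linarith) (by norm_num) (by linarith) ht.1 g hgm
      (hGt t ht)
    have hb : ProbabilityTheory.beta (-H - 1 / 2 + 1) (0 + 1) = 1 / (1 / 2 - H) := by
      rw [ProbabilityTheory.beta, zero_add, Gamma_one,
        show -H - 1 / 2 + 1 = 1 / 2 - H by ring, show 1 / 2 - H + 1 = 3 / 2 - H by ring, hg3]
      rw [mul_one, div_mul_cancel_right₀ hg1.ne', inv_eq_one_div]
    rw [hb] at h
    simp only [rpow_zero, one_mul, show -H - 1 / 2 + 0 + 1 = 1 / 2 - H by ring] at h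
    simp only [hm]
    rw [integral_const_mul, h, μfn]
    simp only [hg, mul_assoc]
    have : 1 / 2 - H ≠ 0 := by linarith
    rw [← mul_assoc (1 / 2 - H), mul_one_div_cancel this, one_mul]
  · have h := fubini_step (b := H - 1 / 2) ha (by linarith) (by linarith) (by linarith) ht.1 g hgm
      (hGt t ht)
    have hb : ProbabilityTheory.beta (-H - 1 / 2 + 1) (H - 1 / 2 + 1)
        = Gamma (1 / 2 - H) * Gamma (H + 1 / 2) := by
      rw [ProbabilityTheory.beta, show -H - 1 / 2 + 1 = 1 / 2 - H by ring,
        show H - 1 / 2 + 1 = H + 1 / 2 by ring, show 1 / 2 - H + (H + 1 / 2) = 1 by ring, Gamma_one,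
        div_one]
    rw [hb] at h
    simp only [show -H - 1 / 2 + (H - 1 / 2) + 1 = 0 by ring, rpow_zero, one_mul] at h
    simp only [hm, mul_left_comm _ (c₁ H * (1 / 2 - H))]
    rw [integral_const_mul, h, η, c₁, hg3]
    have h1 : 1 / 2 - H ≠ 0 := by linarith
    have h2 := hg1.ne'
    have h3 := hg2.ne'
    have h4 := hH0.ne'
    generalize Gamma (1 / 2 - H) = A at *
    generalize Gamma (H + 1 / 2) = B at *
    generalize hK : 1 / 2 - H = K at *
    field_simp
    simp only [hg]
end

section
/- Let H ∈ (1/2, 1), T > 0, and let ξ : [0,T] → ℝ be Hölder continuous with some exponent α ∈ (2H − 1, 1] and satisfy ξ(0) = 0. Set c₁ := 1/(2H Γ(3/2 − H) Γ(H + 1/2)), and define η(t) := ∫₀^t s^{1/2−H} ξ(s) ds and μ(t) := c₁ ∫₀^t (t − s)^{1/2−H} s^{1/2−H} ξ(s) ds for t ∈ [0,T]. Then there exists a function m : [0,T] → ℝ that is Hölder continuous (with exponent α + 1 − 2H) and in particular bounded, such that μ(t) = ∫₀^t m(s) ds for all t ∈ [0,T] and η(t) = 2H ∫₀^t (t − s)^{H−1/2}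 m(s) ds for all t ∈ [0,T]. -/
open MeasureTheory Real

lemma aux_int {φ : ℝ → ℝ} (hφ : Continuous φ) {A B β γ h : ℝ} (hβ : 0 < β) (hγ : β < γ) (hh : 0 < h)
    (hA : ∀ u, 0 < u → |φ u| ≤ A * u ^ γ) (hB : ∀ u, 0 < u → |φ u| ≤ B) :
    IntegrableOn (fun u => φ u * u ^ (-β - 1)) (Set.Ioi 0) ∧
    |∫ u in Set.Ioi (0:ℝ), φ u * u ^ (-β - 1)| ≤ A * (h ^ (γ - β) / (γ - β)) + B * (h ^ (-β) / β) := by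
  have hm : ∀ s : Set ℝ, AEStronglyMeasurable (fun u => φ u * u ^ (-β - 1)) (volume.restrict s) := by
    intro s
    exact (hφ.measurable.mul (measurable_id.pow_const _)).aestronglyMeasurable
  have i1 : IntegrableOn (fun u : ℝ => A * u ^ (γ - β - 1)) (Set.Ioc 0 h) := by
    have := intervalIntegral.intervalIntegrable_rpow' (a := 0) (b := h) (r := γ - β - 1) (by linarith)
    rw [intervalIntegrable_iff_integrableOn_Ioc_of_le hh.le] at this
    exact this.const_mul A
  have i2 : IntegrableOn (fun u : ℝ => B * u ^ (-β - 1)) (Set.Ioi h) :=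
    (integrableOn_Ioi_rpow_of_lt (by linarith) hh).const_mul B
  have b1 : ∀ᵐ u ∂(volume.restrict (Set.Ioc 0 h)), ‖φ u * u ^ (-β - 1)‖ ≤ A * u ^ (γ - β - 1) := by
    refine (ae_restrict_iff' measurableSet_Ioc).2 (Filter.Eventually.of_forall fun u hu => ?_)
    have h0 : 0 < u := hu.1
    have hp : (0:ℝ) ≤ u ^ (-β - 1) := rpow_nonneg h0.le _
    rw [norm_mul, Real.norm_eq_abs, Real.norm_eq_abs, abs_of_nonneg hp]
    calc _ ≤ A * u ^ γ * u ^ (-β - 1) := mul_le_mul_of_nonneg_right (hA u h0) hp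
      _ = _ := by rw [mul_assoc, ← rpow_add h0]; ring_nf
  have b2 : ∀ᵐ u ∂(volume.restrict (Set.Ioi h)), ‖φ u * u ^ (-β - 1)‖ ≤ B * u ^ (-β - 1) := by
    refine (ae_restrict_iff' measurableSet_Ioi).2 (Filter.Eventually.of_forall fun u hu => ?_)
    have h0 : 0 < u := hh.trans hu
    have hp : (0:ℝ) ≤ u ^ (-β - 1) := rpow_nonneg h0.le _
    rw [norm_mul, Real.norm_eq_abs, Real.norm_eq_abs, abs_of_nonneg hp]
    exact mul_le_mul_of_nonneg_right (hB u h0) hp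
  have j1 := Integrable.mono' i1 (hm _) b1
  have j2 := Integrable.mono' i2 (hm _) b2
  have hU : Set.Ioc 0 h ∪ Set.Ioi h = Set.Ioi 0 := Set.Ioc_union_Ioi_eq_Ioi hh.le
  refine ⟨by rw [← hU]; exact IntegrableOn.union j1 j2, ?_⟩
  rw [← hU, setIntegral_union (Set.Ioc_disjoint_Ioi le_rfl) measurableSet_Ioi j1 j2]
  refine (abs_add_le _ _).trans (add_le_add ?_ ?_)
  · refine (norm_integral_le_of_norm_le i1 b1).trans (le_of_eq ?_)
    rw [integral_const_mul, ← intervalIntegral.integral_of_le hh.le, integral_rpow (Or.inl (by linarith))]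
    rw [zero_rpow (by linarith)]
    ring_nf
  · refine (norm_integral_le_of_norm_le i2 b2).trans (le_of_eq ?_)
    rw [integral_const_mul, integral_Ioi_rpow_of_lt (by linarith) hh]
    have : -β - 1 + 1 = -β := by ring
    rw [this, neg_div_neg_eq]

/-- Marchaud derivative -/
noncomputable def Mar (β : ℝ) (g : ℝ → ℝ) (t : ℝ) : ℝ :=
  β * ∫ u in Set.Ioi (0:ℝ), (g t - g (t - u)) * u ^ (-β - 1)

lemma mar_holder {g : ℝ → ℝ} {C K β γ : ℝ} (hβ : 0 < β) (hγ : β < γ) (hg : Continuous g)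
    (hC : ∀ x y, |g x - g y| ≤ C * |x - y| ^ γ) (hK : ∀ x, |g x| ≤ K) (x y : ℝ) :
    |Mar β g x - Mar β g y| ≤ (β * (2 * C * (1 / (γ - β) + 1 / β))) * |x - y| ^ (γ - β) := by
  rcases eq_or_ne x y with rfl | hxy
  · simp [zero_rpow (by linarith : γ - β ≠ 0)]
  have hh : 0 < |x - y| := abs_pos.2 (sub_ne_zero.2 hxy)
  have key : ∀ x u, 0 < u → |g x - g (x - u)| ≤ C * u ^ γ := by
    intro x u hu
    have := hC x (x - u)
    rwa [sub_sub_cancel, abs_of_pos hu] at this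
  have key2 : ∀ x u, |g x - g (x - u)| ≤ 2 * K := by
    intro x u
    have := abs_sub (g x) (g (x - u))
    linarith [hK x, hK (x - u)]
  have I : ∀ x, IntegrableOn (fun u => (g x - g (x - u)) * u ^ (-β - 1)) (Set.Ioi 0) := fun x =>
    (aux_int (by fun_prop) hβ hγ one_pos (key x) (fun u _ => key2 x u)).1
  have := (aux_int (φ := fun u => (g x - g (x - u)) - (g y - g (y - u))) (A := 2 * C)
    (B := 2 * C * |x - y| ^ γ) (by fun_prop) hβ hγ hh ?_ ?_).2
  · unfold Mar
    rw [← mul_sub, ← integral_sub (I x) (I y), abs_mul, abs_of_pos hβ, mul_assoc β]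
    simp only [← sub_mul]
    refine mul_le_mul_of_nonneg_left (this.trans (le_of_eq ?_)) hβ.le
    rw [sub_eq_add_neg γ β, rpow_add hh]
    ring
  · intro u hu
    refine (abs_sub _ _).trans ?_
    linarith [key x u hu, key y u hu]
  · intro u hu
    have h1 := hC x y
    have h2 := hC (x - u) (y - u)
    rw [sub_sub_sub_cancel_right] at h2
    have : g x - g (x - u) - (g y - g (y - u)) = (g x - g y) - (g (x - u) - g (y - u)) := by ring
    rw [this]
    refine (abs_sub _ _).trans ?_
    linarith

lemma mar_integral {g : ℝ → ℝ} {C K β γ : ℝ} (hβ : 0 < β) (hβ1 : β < 1) (hγ : β < γ) (hg : Continuous g)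
    (hC : ∀ x y, |g x - g y| ≤ C * |x - y| ^ γ) (hK : ∀ x, |g x| ≤ K) (hg0 : ∀ x ≤ 0, g x = 0)
    (t : ℝ) (ht : 0 ≤ t) :
    ∫ r in Set.Ioc 0 t, Mar β g r = ∫ s in Set.Ioc 0 t, (t - s) ^ (-β) * g s := by
  have hK0 : 0 ≤ K := (abs_nonneg _).trans (hK 0)
  have hC0 : 0 ≤ C := by have := (abs_nonneg _).trans (hC 1 0); simpa using this
  set G : ℝ → ℝ := fun y => ∫ s in (0:ℝ)..y, g s with hG
  have hGd : ∀ x, HasDerivAt G (g x) x := fun x =>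
    intervalIntegral.integral_hasDerivAt_right (hg.intervalIntegrable _ _)
      hg.stronglyMeasurable.stronglyMeasurableAtFilter hg.continuousAt
  have hGc : Continuous G := continuous_iff_continuousAt.2 fun x => (hGd x).continuousAt
  have hGneg : ∀ y ≤ 0, G y = 0 := by
    intro y hy
    simp only [hG]
    rw [intervalIntegral.integral_symm, intervalIntegral.integral_of_le hy, neg_eq_zero]
    rw [setIntegral_congr_fun measurableSet_Ioc (g := fun _ => (0:ℝ)) (fun s hs => hg0 s hs.2)]
    simp
  have hGL : ∀ x y, |G x - G y| ≤ K * |x - y| := by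
    intro x y
    simp only [hG]
    rw [intervalIntegral.integral_interval_sub_left (hg.intervalIntegrable _ _) (hg.intervalIntegrable _ _)]
    exact intervalIntegral.norm_integral_le_of_norm_le_const (f := g) (fun s _ => hK s)
  have hB1 : ∀ u, 0 < u → |G t - G (t - u)| ≤ K * u ^ (1:ℝ) := by
    intro u hu
    have := hGL t (t - u)
    rw [rpow_one]
    rwa [sub_sub_cancel, abs_of_pos hu] at this
  have hB2 : ∀ u, 0 < u → |G t - G (t - u)| ≤ K * t := by
    intro u hu
    rcases le_total u t with h | h
    · have := hB1 u hu
      rw [rpow_one] at this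
      exact this.trans (mul_le_mul_of_nonneg_left h hK0)
    · have := hGL t 0
      rw [hGneg (t - u) (by linarith)]
      rwa [hGneg 0 le_rfl, sub_zero t, abs_of_nonneg ht] at this
  have hIG := (aux_int (φ := fun u => G t - G (t - u)) (by fun_prop) hβ hβ1 one_pos hB1 hB2).1
  -- Fubini
  have step1 : ∫ r in Set.Ioc 0 t, Mar β g r
      = β * ∫ u in Set.Ioi (0:ℝ), (G t - G (t - u)) * u ^ (-β - 1) := by
    unfold Mar
    rw [integral_const_mul]
    congr 1
    rw [integral_integral_swap]
    · refine setIntegral_congr_fun measurableSet_Ioi fun u hu => ?_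
      have hu : 0 < u := hu
      rw [integral_mul_const]
      congr 1
      rw [← intervalIntegral.integral_of_le ht, intervalIntegral.integral_sub (hg.intervalIntegrable _ _)
        (Continuous.intervalIntegrable (by fun_prop) _ _), intervalIntegral.integral_comp_sub_right (fun x => g x) u]
      rw [← intervalIntegral.integral_interval_sub_left (hg.intervalIntegrable 0 (t - u)) (hg.intervalIntegrable 0 (0 - u))]
      have := hGneg (0 - u) (by linarith)
      simp only [hG] at this ⊢
      rw [this, sub_zero]
    · have hD := (aux_int (φ := fun u => min (C * |u| ^ γ) (2 * K)) (A := C) (B := 2 * K)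
        (Continuous.min (continuous_const.mul (continuous_abs.rpow_const (fun _ => Or.inr (by linarith)))) continuous_const)
        hβ hγ one_pos ?_ ?_).1
      · have hP := Integrable.mul_prod (μ := volume.restrict (Set.Ioc 0 t)) (f := fun _ : ℝ => (1:ℝ))
          (by simp) hD
        refine Integrable.mono' hP ?_ ?_
        · refine Measurable.aestronglyMeasurable ?_
          have := hg.measurable
          exact ((this.comp measurable_fst).sub (this.comp (measurable_fst.sub measurable_snd))).mul
            (measurable_snd.pow_const _)
        · rw [Measure.prod_restrict]
          refine (ae_restrict_iff' (measurableSet_Ioc.prod measurableSet_Ioi)).2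
            (Filter.Eventually.of_forall ?_)
          rintro ⟨r, u⟩ ⟨_, hu⟩
          have hu : 0 < u := hu
          simp only [Function.uncurry, one_mul]
          have hp : (0:ℝ) ≤ u ^ (-β - 1) := rpow_nonneg hu.le _
          rw [norm_mul, Real.norm_eq_abs, Real.norm_eq_abs, abs_of_nonneg hp]
          refine mul_le_mul_of_nonneg_right (le_min ?_ ?_) hp
          · have := hC r (r - u)
            rwa [sub_sub_cancel] at this
          · have := abs_sub (g r) (g (r - u))
            linarith [hK r, hK (r - u)]
      · intro u hu
        rw [abs_of_nonneg (le_min (by positivity) (by linarith)), abs_of_pos hu]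
        exact min_le_left _ _
      · intro u hu
        rw [abs_of_nonneg (le_min (by positivity) (by linarith))]
        exact min_le_right _ _
  rw [step1]
  -- integrability of the kernel
  have hK1 : IntegrableOn (fun u => u ^ (-β) * g (t - u)) (Set.Ioc 0 t) := by
    have := intervalIntegral.intervalIntegrable_rpow' (a := 0) (b := t) (r := -β) (by linarith)
    rw [intervalIntegrable_iff_integrableOn_Ioc_of_le ht] at this
    exact Integrable.mul_bdd (c := K) this (Continuous.aestronglyMeasurable (by fun_prop))
      (Filter.Eventually.of_forall fun _ => hK _)
  have hz : ∀ u ∈ Set.Ioi t, u ^ (-β) * g (t - u) = 0 := by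
    intro u hu
    have hu : t < u := hu
    rw [hg0 _ (by linarith), mul_zero]
  have hK2 : IntegrableOn (fun u => u ^ (-β) * g (t - u)) (Set.Ioi t) :=
    (integrableOn_zero).congr_fun (fun u hu => (hz u hu).symm) measurableSet_Ioi
  have hU : Set.Ioc 0 t ∪ Set.Ioi t = Set.Ioi 0 := Set.Ioc_union_Ioi_eq_Ioi ht
  have hK3 : IntegrableOn (fun u => u ^ (-β) * g (t - u)) (Set.Ioi 0) := by
    rw [← hU]; exact hK1.union hK2
  have ibp := integral_Ioi_mul_deriv_eq_deriv_mul (a := 0) (a' := (0:ℝ)) (b' := 0)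
    (u := fun u => G t - G (t - u)) (u' := fun u => g (t - u)) (v := fun u => - (u ^ (-β) / β))
    (v' := fun u => u ^ (-β - 1)) ?_ ?_ hIG ?_ ?_ ?_
  · rw [ibp]
    have e1 : ∫ x in Set.Ioi (0:ℝ), g (t - x) * -(x ^ (-β) / β)
        = -(1/β) * ∫ x in Set.Ioi (0:ℝ), x ^ (-β) * g (t - x) := by
      rw [← integral_const_mul]
      congr 1; ext x; ring
    rw [e1, ← hU, setIntegral_union (Set.Ioc_disjoint_Ioi le_rfl) measurableSet_Ioi hK1 hK2,
      setIntegral_congr_fun measurableSet_Ioi hz]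
    rw [← intervalIntegral.integral_of_le ht, ← intervalIntegral.integral_of_le ht]
    have := intervalIntegral.integral_comp_sub_left (a := 0) (b := t) (fun x => x ^ (-β) * g (t - x)) t
    simp only [sub_sub_cancel, sub_self, sub_zero] at this
    rw [this]
    simp
    rw [mul_inv_cancel_left₀ hβ.ne']
  · intro x _
    have := ((hGd (t - x)).comp x ((hasDerivAt_id x).const_sub t)).const_sub (G t)
    simpa using this
  · intro x hx
    have hx : 0 < x := hx
    have := ((hasDerivAt_rpow_const (x := x) (p := -β) (Or.inl hx.ne')).div_const β).neg
    have e : x ^ (-β - 1) = -(-β * x ^ (-β - 1) / β) := by field_simp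
    rw [← e] at this
    exact this
  · refine (hK3.const_mul (-(1/β))).congr (Filter.Eventually.of_forall fun x => ?_)
    simp only [Pi.mul_apply]; ring
  · have hT : Filter.Tendsto (fun x : ℝ => K / β * x ^ (1 - β)) (nhdsWithin 0 (Set.Ioi 0)) (nhds 0) := by
      have := ((continuous_rpow_const (q := 1 - β) (by linarith)).const_mul (K/β)).tendsto 0
      rw [zero_rpow (by linarith), mul_zero] at this
      exact this.mono_left nhdsWithin_le_nhds
    refine squeeze_zero_norm' ?_ hT
    filter_upwards [self_mem_nhdsWithin] with x hx
    have hx : 0 < x := hx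
    have hp : (0:ℝ) ≤ x ^ (-β) / β := div_nonneg (rpow_nonneg hx.le _) hβ.le
    rw [Pi.mul_apply, norm_mul, norm_neg, Real.norm_eq_abs, Real.norm_eq_abs, abs_of_nonneg hp]
    refine (mul_le_mul_of_nonneg_right (hB1 x hx) hp).trans (le_of_eq ?_)
    rw [sub_eq_add_neg, rpow_add hx]; ring
  · have hT : Filter.Tendsto (fun x : ℝ => K * t / β * x ^ (-β)) Filter.atTop (nhds 0) := by
      have := (tendsto_rpow_neg_atTop hβ).const_mul (K * t / β)
      rwa [mul_zero] at this
    refine squeeze_zero_norm' ?_ hT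
    filter_upwards [Filter.eventually_gt_atTop 0] with x hx
    have hp : (0:ℝ) ≤ x ^ (-β) / β := div_nonneg (rpow_nonneg hx.le _) hβ.le
    rw [Pi.mul_apply, norm_mul, norm_neg, Real.norm_eq_abs, Real.norm_eq_abs, abs_of_nonneg hp]
    refine (mul_le_mul_of_nonneg_right (hB2 x hx) hp).trans (le_of_eq ?_)
    ring

lemma beta_real {β : ℝ} (hβ : 0 < β) (hβ1 : β < 1) {r t : ℝ} (h : r < t) :
    ∫ s in Set.Ioc r t, (t - s) ^ (β - 1) * (s - r) ^ (-β) = Real.Gamma β * Real.Gamma (1 - β) := by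
  have ha : 0 < t - r := sub_pos.2 h
  have h1 : ∫ s in Set.Ioc r t, (t - s) ^ (β - 1) * (s - r) ^ (-β)
      = ∫ x in (0:ℝ)..(t - r), x ^ (-β) * ((t - r) - x) ^ (β - 1) := by
    rw [← intervalIntegral.integral_of_le h.le]
    have := intervalIntegral.integral_comp_sub_right (a := r) (b := t)
      (fun x => x ^ (-β) * ((t - r) - x) ^ (β - 1)) r
    rw [sub_self] at this
    rw [← this]
    congr 1; ext x
    rw [sub_sub_sub_cancel_right, mul_comm]
  have h2 := Complex.betaIntegral_scaled ((1 - β : ℝ) : ℂ) (β : ℂ) ha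
  have h3 := Complex.Gamma_mul_Gamma_eq_betaIntegral (s := ((1 - β : ℝ) : ℂ)) (t := (β : ℂ))
    (by simpa using hβ1) (by simpa using hβ)
  have e1 : ((1 - β : ℝ) : ℂ) + (β : ℂ) = 1 := by push_cast; ring
  rw [e1, Complex.Gamma_one, one_mul] at h3
  rw [e1, sub_self, Complex.cpow_zero, one_mul, ← h3] at h2
  rw [h1]
  apply Complex.ofReal_injective
  rw [← intervalIntegral.integral_ofReal, Complex.ofReal_mul, ← Complex.Gamma_ofReal,
    ← Complex.Gamma_ofReal, mul_comm, ← h2]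
  rw [intervalIntegral.integral_of_le ha.le, intervalIntegral.integral_of_le ha.le]
  refine setIntegral_congr_fun measurableSet_Ioc fun x hx => ?_
  rw [Complex.ofReal_mul, Complex.ofReal_cpow hx.1.le, Complex.ofReal_cpow (sub_nonneg.2 hx.2)]
  push_cast
  congr 2
  ring

lemma abel_fubini {g : ℝ → ℝ} {K β : ℝ} (hβ : 0 < β) (hβ1 : β < 1) (hg : Continuous g)
    (hK : ∀ x, |g x| ≤ K) (t : ℝ) (ht : 0 ≤ t) :
    ∫ s in Set.Ioc 0 t, (t - s) ^ (β - 1) * ∫ r in Set.Ioc 0 s, (s - r) ^ (-β) * g r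
      = Real.Gamma β * Real.Gamma (1 - β) * ∫ r in Set.Ioc 0 t, g r := by
  set f : ℝ → ℝ := (Set.Ioc 0 t).indicator (fun s => (t - s) ^ (β - 1)) with hf
  set k : ℝ → ℝ := (Set.Ico (-t) 0).indicator (fun x => (-x) ^ (-β)) with hk
  set q : ℝ → ℝ := (Set.Ioo 0 t).indicator g with hq
  have If : Integrable f := by
    rw [hf, integrable_indicator_iff measurableSet_Ioc]
    have := (intervalIntegral.intervalIntegrable_rpow' (a := t) (b := 0) (r := β - 1)
      (by linarith)).comp_sub_left t
    rw [sub_self, sub_zero, intervalIntegrable_iff_integrableOn_Ioc_of_le ht] at this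
    exact this
  have Ik : Integrable k := by
    rw [hk, integrable_indicator_iff measurableSet_Ico, integrableOn_Ico_iff_integrableOn_Ioo, ← integrableOn_Ioc_iff_integrableOn_Ioo]
    have := (intervalIntegral.intervalIntegrable_rpow' (a := t) (b := 0) (r := -β)
      (by linarith)).comp_sub_left 0
    rw [zero_sub, sub_zero, intervalIntegrable_iff_integrableOn_Ioc_of_le (by linarith)] at this
    simpa using this
  have I0 := If.convolution_integrand (ContinuousLinearMap.mul ℝ ℝ) Ik
  simp only [ContinuousLinearMap.mul_apply'] at I0
  have hqm : Measurable q := hg.measurable.indicator measurableSet_Ioo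
  have hqb : ∀ x, ‖q x‖ ≤ K := fun x => (norm_indicator_le_norm_self g x).trans (hK x)
  have I1 := I0.mul_bdd (c := K) (g := fun p => q p.1)
    (hqm.comp measurable_fst).aestronglyMeasurable (Filter.Eventually.of_forall fun p => hqb p.1)
  have sw := integral_integral_swap (f := fun r s => f s * k (r - s) * q r) I1
  have L : ∫ s, ∫ r, f s * k (r - s) * q r
      = ∫ s in Set.Ioc 0 t, (t - s) ^ (β - 1) * ∫ r in Set.Ioc 0 s, (s - r) ^ (-β) * g r := by
    rw [← integral_indicator measurableSet_Ioc]
    congr 1; ext s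
    by_cases hs : s ∈ Set.Ioc 0 t
    · rw [Set.indicator_of_mem hs, ← integral_indicator measurableSet_Ioc, ← integral_const_mul]
      congr 1; ext r
      rw [hf, Set.indicator_of_mem hs, mul_assoc]
      congr 1
      by_cases hr : r ∈ Set.Ioo 0 s
      · rw [hk, hq, Set.indicator_of_mem (s := Set.Ico (-t) 0) (by constructor <;> linarith [hr.1, hr.2, hs.1, hs.2]),
          Set.indicator_of_mem (s := Set.Ioo 0 t) (by constructor <;> linarith [hr.1, hr.2, hs.1, hs.2]),
          Set.indicator_of_mem (s := Set.Ioc 0 s) ⟨hr.1, hr.2.le⟩, neg_sub]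
      · have e1 : k (r - s) * q r = 0 := by
          by_cases h0 : 0 < r
          · have : s ≤ r := by
              by_contra hh
              exact hr ⟨h0, not_le.1 hh⟩
            rw [hk, Set.indicator_of_notMem, zero_mul]
            intro h; linarith [h.2]
          · rw [hq, Set.indicator_of_notMem (fun h => h0 h.1), mul_zero]
        rw [e1]
        by_cases hr2 : r ∈ Set.Ioc 0 s
        · have : r = s := by
            by_contra hh
            exact hr ⟨hr2.1, lt_of_le_of_ne hr2.2 hh⟩
          rw [Set.indicator_of_mem hr2, this, sub_self, zero_rpow (by linarith), zero_mul]
        · rw [Set.indicator_of_notMem hr2]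
    · rw [Set.indicator_of_notMem hs, hf, Set.indicator_of_notMem hs]
      simp
  have R : ∫ r, ∫ s, f s * k (r - s) * q r
      = Real.Gamma β * Real.Gamma (1 - β) * ∫ r in Set.Ioc 0 t, g r := by
    rw [integral_Ioc_eq_integral_Ioo, ← integral_indicator measurableSet_Ioo, ← integral_const_mul]
    congr 1; ext r
    rw [integral_mul_const]
    by_cases hr : r ∈ Set.Ioo 0 t
    · congr 1
      rw [← beta_real hβ hβ1 hr.2, ← integral_indicator measurableSet_Ioc]
      congr 1; ext s
      by_cases hs : s ∈ Set.Ioc r t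
      · rw [Set.indicator_of_mem hs, hf, hk, Set.indicator_of_mem (s := Set.Ioc 0 t) ⟨hr.1.trans hs.1, hs.2⟩,
          Set.indicator_of_mem (s := Set.Ico (-t) 0) (by constructor <;> linarith [hr.1, hr.2, hs.1, hs.2]), neg_sub]
      · rw [Set.indicator_of_notMem hs]
        by_cases h1 : s ≤ t
        · have : s ≤ r := by
            by_contra hh
            exact hs ⟨not_le.1 hh, h1⟩
          rw [hk, Set.indicator_of_notMem, mul_zero]
          intro h; linarith [h.2]
        · rw [hf, Set.indicator_of_notMem (fun h => h1 h.2), zero_mul]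
    · rw [hq, Set.indicator_of_notMem hr]; simp
  rw [← L, ← sw, R]

lemma abel_main {g M : ℝ → ℝ} {K β : ℝ} (hβ : 0 < β) (hβ1 : β < 1) (hg : Continuous g)
    (hM : Continuous M) (hK : ∀ x, |g x| ≤ K) (t : ℝ) (ht : 0 ≤ t)
    (hP : ∀ s, 0 ≤ s → ∫ r in Set.Ioc 0 s, M r = ∫ r in Set.Ioc 0 s, (s - r) ^ (-β) * g r) :
    ∫ s in Set.Ioc 0 t, (t - s) ^ β * M s
      = Real.Gamma (1 + β) * Real.Gamma (1 - β) * ∫ r in Set.Ioc 0 t, g r := by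
  set P : ℝ → ℝ := fun y => ∫ s in (0:ℝ)..y, M s with hPd
  have hGd : ∀ x, HasDerivAt P (M x) x := fun x =>
    intervalIntegral.integral_hasDerivAt_right (hM.intervalIntegrable _ _)
      hM.stronglyMeasurable.stronglyMeasurableAtFilter hM.continuousAt
  have hPc : Continuous P := continuous_iff_continuousAt.2 fun x => (hGd x).continuousAt
  have I := (intervalIntegral.intervalIntegrable_rpow' (a := t) (b := 0) (r := β - 1)
      (by linarith)).comp_sub_left t
  rw [sub_self, sub_zero] at I
  have ibp := intervalIntegral.integral_mul_deriv_eq_deriv_mul_of_hasDerivAt (a := 0) (b := t)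
    (u := fun s => (t - s) ^ β) (u' := fun s => - β * (t - s) ^ (β - 1)) (v := P) (v' := M)
    (Continuous.continuousOn ((continuous_const.sub continuous_id).rpow_const fun _ => Or.inr hβ.le))
    hPc.continuousOn ?_ (fun x _ => hGd x) (I.const_mul _) (hM.intervalIntegrable _ _)
  · rw [← intervalIntegral.integral_of_le ht, ibp]
    have hP0 : P 0 = 0 := by simp [hPd]
    simp only [sub_self, zero_rpow hβ.ne', hP0, zero_mul, mul_zero]
    have e : ∫ x in (0:ℝ)..t, -β * (t - x) ^ (β - 1) * P x
        = -β * ∫ s in Set.Ioc 0 t, (t - s) ^ (β - 1) * ∫ r in Set.Ioc 0 s, (s - r) ^ (-β) * g r := by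
      rw [intervalIntegral.integral_of_le ht, ← integral_const_mul]
      refine setIntegral_congr_fun measurableSet_Ioc fun s hs => ?_
      simp only [hPd]
      rw [intervalIntegral.integral_of_le hs.1.le, hP s hs.1.le, mul_assoc]
    rw [e, abel_fubini hβ hβ1 hg hK t ht, add_comm 1 β, Real.Gamma_add_one hβ.ne']
    ring
  · intro x hx
    rw [min_eq_left ht, max_eq_right ht] at hx
    have := ((hasDerivAt_id x).const_sub t).rpow_const (p := β) (Or.inl (sub_pos.2 hx.2).ne')
    have e : -1 * β * (t - id x) ^ (β - 1) = -β * (t - x) ^ (β - 1) := by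
      rw [id]; ring
    rw [e] at this
    exact this

lemma g_holder {T c α β : ℝ} {ξ : ℝ → ℝ} (hβ : 0 < β) (hβ1 : β < 1) (hα : β < α) (hα1 : α ≤ 1) (hc : 0 ≤ c)
    (hT : 0 < T)
    (hξ : ∀ s ∈ Set.Icc (0 : ℝ) T, ∀ t ∈ Set.Icc (0 : ℝ) T, |ξ t - ξ s| ≤ c * |t - s| ^ α)
    (hξ0 : ξ 0 = 0) (s t : ℝ) (hs : s ∈ Set.Icc (0:ℝ) T) (ht : t ∈ Set.Icc (0:ℝ) T) (hst : s ≤ t) :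
    |t ^ (-β) * ξ t - s ^ (-β) * ξ s| ≤ 2 * c * |t - s| ^ (α - β) := by
  have hb : ∀ x ∈ Set.Icc (0:ℝ) T, |ξ x| ≤ c * x ^ α := by
    intro x hx
    have := hξ 0 ⟨le_rfl, hT.le⟩ x hx
    rwa [hξ0, sub_zero, sub_zero, abs_of_nonneg hx.1] at this
  rcases hst.eq_or_lt with rfl | hlt
  · simp only [sub_self, abs_zero]; positivity
  have htp : 0 < t := hs.1.trans_lt hlt
  have hd : 0 < t - s := sub_pos.2 hlt
  rw [abs_of_pos hd]
  rcases hs.1.eq_or_lt with rfl | hsp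
  · rw [hξ0, mul_zero, sub_zero, sub_zero, abs_mul, abs_of_nonneg (rpow_nonneg htp.le _)]
    calc _ ≤ t ^ (-β) * (c * t ^ α) := mul_le_mul_of_nonneg_left (hb t ht) (rpow_nonneg htp.le _)
      _ = c * t ^ (α - β) := by rw [sub_eq_add_neg, rpow_add htp]; ring
      _ ≤ _ := by have : 0 ≤ c * t ^ (α - β) := by positivity
                  linarith
  have e : t ^ (-β) * ξ t - s ^ (-β) * ξ s = t ^ (-β) * (ξ t - ξ s) - (s ^ (-β) - t ^ (-β)) * ξ s := by ring
  have hmon : t ^ (-β) ≤ s ^ (-β) := rpow_le_rpow_of_nonpos hsp hlt.le (by linarith)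
  have k1 : |t ^ (-β) * (ξ t - ξ s)| ≤ c * (t - s) ^ (α - β) := by
    rw [abs_mul, abs_of_nonneg (rpow_nonneg htp.le _)]
    have h1 := hξ s hs t ht
    rw [abs_of_pos hd] at h1
    have h2 : t ^ (-β) ≤ (t - s) ^ (-β) := rpow_le_rpow_of_nonpos hd (by linarith) (by linarith)
    calc _ ≤ (t - s) ^ (-β) * (c * (t - s) ^ α) := by gcongr
      _ = _ := by rw [sub_eq_add_neg α, rpow_add hd]; ring
  have k2 : |(s ^ (-β) - t ^ (-β)) * ξ s| ≤ c * (t - s) ^ (α - β) := by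
    rw [abs_mul, abs_of_nonneg (sub_nonneg.2 hmon)]
    have h1 := hb s hs
    have h3 : (s ^ (-β) - t ^ (-β)) * |ξ s| ≤ (s ^ (-β) - t ^ (-β)) * (c * s ^ α) :=
      mul_le_mul_of_nonneg_left h1 (sub_nonneg.2 hmon)
    refine h3.trans ?_
    have h4 : (s ^ (-β) - t ^ (-β)) * s ^ α ≤ (t - s) ^ (α - β) := by
      rcases le_total s (t - s) with h | h
      · calc (s ^ (-β) - t ^ (-β)) * s ^ α ≤ s ^ (-β) * s ^ α := by
              have : 0 ≤ t ^ (-β) := rpow_nonneg htp.le _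
              gcongr; linarith
          _ = s ^ (α - β) := by rw [← rpow_add hsp]; ring_nf
          _ ≤ _ := rpow_le_rpow hsp.le h (by linarith)
      · have hx : s / t ≤ (s / t) ^ β := by
          have := rpow_le_rpow_of_exponent_ge (x := s / t) (by positivity) ((div_le_one htp).2 hlt.le) hβ1.le
          rwa [rpow_one] at this
        have ht' : t ^ (-β) = s ^ (-β) * (s / t) ^ β := by
          rw [div_rpow hsp.le htp.le, rpow_neg htp.le, rpow_neg hsp.le]
          have := (rpow_pos_of_pos hsp β).ne'
          field_simp
        have hx2 : 1 - s / t ≤ (t - s) / s := by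
          have : 1 - s / t = (t - s) / t := by field_simp
          rw [this]
          exact div_le_div_of_nonneg_left hd.le hsp hlt.le
        calc (s ^ (-β) - t ^ (-β)) * s ^ α = (s ^ (-β) * s ^ α) * (1 - (s / t) ^ β) := by rw [ht']; ring
          _ = s ^ (α - β) * (1 - (s / t) ^ β) := by rw [← rpow_add hsp]; ring_nf
          _ ≤ s ^ (α - β) * ((t - s) / s) := by gcongr; linarith
          _ = s ^ (α - β - 1) * (t - s) := by rw [rpow_sub_one hsp.ne']; ring
          _ ≤ (t - s) ^ (α - β - 1) * (t - s) := by
              have := rpow_le_rpow_of_nonpos (z := α - β - 1) hd h (by linarith)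
              gcongr
          _ = _ := by rw [rpow_sub_one hd.ne']; field_simp
    calc _ = c * ((s ^ (-β) - t ^ (-β)) * s ^ α) := by ring
      _ ≤ _ := by gcongr
  rw [e]
  refine (abs_sub _ _).trans ?_
  linarith

theorem mu_eta_large_hurst
    (H T : ℝ) (hH : H ∈ Set.Ioo (1 / 2 : ℝ) 1) (hT : 0 < T)
    (ξ : ℝ → ℝ) (α : ℝ) (hα : α ∈ Set.Ioc (2 * H - 1) 1)
    (c : ℝ) (hc : 0 ≤ c)
    (hξHolder : ∀ s ∈ Set.Icc (0 : ℝ) T, ∀ t ∈ Set.Icc (0 : ℝ) T,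
      |ξ t - ξ s| ≤ c * |t - s| ^ α)
    (hξ0 : ξ 0 = 0) :
    ∃ m : ℝ → ℝ,
      (∃ c' : ℝ, 0 ≤ c' ∧ ∀ s ∈ Set.Icc (0 : ℝ) T, ∀ t ∈ Set.Icc (0 : ℝ) T,
        |m t - m s| ≤ c' * |t - s| ^ (α + 1 - 2 * H)) ∧
      (∃ M : ℝ, ∀ t ∈ Set.Icc (0 : ℝ) T, |m t| ≤ M) ∧
      (∀ t ∈ Set.Icc (0 : ℝ) T, μfn H ξ t = ∫ s in Set.Ioc (0 : ℝ) t, m s) ∧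
      (∀ t ∈ Set.Icc (0 : ℝ) T,
        η H ξ t = 2 * H * ∫ s in Set.Ioc (0 : ℝ) t, (t - s) ^ (H - 1 / 2) * m s) := by
  obtain ⟨hH1, hH2⟩ := hH
  obtain ⟨hα1, hα2⟩ := hα
  obtain ⟨β, rfl⟩ : ∃ β, H = β + 1 / 2 := ⟨H - 1 / 2, by ring⟩
  have hβ : 0 < β := by linarith
  have hβ1 : β < 1 := by linarith
  have e1 : 1 / 2 - (β + 1 / 2) = -β := by ring
  have e2 : β + 1 / 2 - 1 / 2 = β := by ring
  have e3 : α + 1 - 2 * (β + 1 / 2) = α - β - β := by ring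
  have e4 : 3 / 2 - (β + 1 / 2) = 1 - β := by ring
  have e5 : β + 1 / 2 + 1 / 2 = 1 + β := by ring
  simp only [μfn, η, c₁, e1, e2, e3, e4, e5]
  have hαβ : 2 * β < α := by linarith
  set p : ℝ → ℝ := fun x => max 0 (min x T) with hp
  have hpI : ∀ x, p x ∈ Set.Icc 0 T := fun x =>
    ⟨le_max_left _ _, max_le hT.le (min_le_right _ _)⟩
  have hpid : ∀ x ∈ Set.Icc 0 T, p x = x := fun x hx => by
    simp only [hp]; rw [min_eq_left hx.2, max_eq_right hx.1]
  have hp0 : ∀ x ≤ 0, p x = 0 := fun x hx =>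
    max_eq_left ((min_le_left _ _).trans hx)
  have hpL : ∀ x y, |p x - p y| ≤ |x - y| := fun x y => by
    simp only [hp]
    refine (abs_max_sub_max_le_max _ _ _ _).trans ?_
    rw [sub_self, abs_zero]
    refine max_le (abs_nonneg _) ((abs_min_sub_min_le_max _ _ _ _).trans ?_)
    simp
  set g : ℝ → ℝ := fun x => (p x) ^ (-β) * ξ (p x) with hg
  have hC : ∀ x y, |g x - g y| ≤ 2 * c * |x - y| ^ (α - β) := by
    intro x y
    have key : |g x - g y| ≤ 2 * c * |p x - p y| ^ (α - β) := by
      rcases le_total (p y) (p x) with h | h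
      · exact g_holder hβ hβ1 (by linarith) hα2 hc hT hξHolder hξ0 _ _ (hpI y) (hpI x) h
      · rw [abs_sub_comm, abs_sub_comm (p x)]
        exact g_holder hβ hβ1 (by linarith) hα2 hc hT hξHolder hξ0 _ _ (hpI x) (hpI y) h
    refine key.trans ?_
    have := rpow_le_rpow (abs_nonneg _) (hpL x y) (by linarith : 0 ≤ α - β)
    gcongr
  have hg0 : ∀ x ≤ 0, g x = 0 := fun x hx => by
    simp only [hg]; rw [hp0 x hx, hξ0, mul_zero]
  have cont_of : ∀ (F : ℝ → ℝ) (C δ : ℝ), 0 < δ → (∀ x y, |F x - F y| ≤ C * |x - y| ^ δ) →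
      Continuous F := by
    intro F C δ hδ h
    refine continuous_iff_continuousAt.2 fun x => ?_
    rw [ContinuousAt, tendsto_iff_norm_sub_tendsto_zero]
    have hc : Continuous fun y : ℝ => C * |y - x| ^ δ :=
      continuous_const.mul ((continuous_id.sub continuous_const).abs.rpow_const fun _ => Or.inr hδ.le)
    have ht := hc.tendsto x
    rw [sub_self, abs_zero, zero_rpow hδ.ne', mul_zero] at ht
    exact squeeze_zero (fun _ => norm_nonneg _) (fun y => h y x) ht
  have hgc : Continuous g := cont_of g _ _ (by linarith) hC
  have hK : ∀ x, |g x| ≤ 2 * c * T ^ (α - β) := by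
    intro x
    have h1 := hC (p x) 0
    have h2 : g (p x) = g x := by simp only [hg]; rw [hpid _ (hpI x)]
    rw [h2, hg0 0 le_rfl, sub_zero, sub_zero, abs_of_nonneg (hpI x).1] at h1
    refine h1.trans ?_
    have := rpow_le_rpow (hpI x).1 (hpI x).2 (by linarith : 0 ≤ α - β)
    gcongr
  have hMH := fun x y => mar_holder (g := g) hβ (by linarith : β < α - β) hgc hC hK x y
  have hMI := fun t ht => mar_integral (g := g) hβ hβ1 (by linarith : β < α - β) hgc hC hK hg0 t ht
  have hMc : Continuous (Mar β g) := cont_of _ _ _ (by linarith) hMH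
  have hgid : ∀ t ∈ Set.Icc 0 T, ∀ s ∈ Set.Ioc 0 t, g s = s ^ (-β) * ξ s := by
    intro t ht s hs
    simp only [hg]; rw [hpid s ⟨hs.1.le, hs.2.trans ht.2⟩]
  set k := 1 / (2 * (β + 1 / 2) * Real.Gamma (1 - β) * Real.Gamma (1 + β)) with hk
  have G1 : 0 < Real.Gamma (1 - β) := Real.Gamma_pos_of_pos (by linarith)
  have G2 : 0 < Real.Gamma (1 + β) := Real.Gamma_pos_of_pos (by linarith)
  have hkp : 0 < k := by positivity
  refine ⟨fun x => k * Mar β g x, ⟨k * (β * (2 * (2 * c) * (1 / (α - β - β) + 1 / β))), ?_, ?_⟩, ?_, ?_, ?_⟩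
  · have : 0 < α - β - β := by linarith
    positivity
  · intro s _ t _
    rw [← mul_sub, abs_mul, abs_of_pos hkp, mul_assoc k]
    exact mul_le_mul_of_nonneg_left (hMH t s) hkp.le
  · obtain ⟨B, hB⟩ := (isCompact_Icc (a := (0:ℝ)) (b := T)).exists_bound_of_continuousOn
      (hMc.const_mul k).continuousOn
    exact ⟨B, hB⟩
  · intro t ht
    rw [integral_const_mul, hMI t ht.1]
    congr 1
    refine setIntegral_congr_fun measurableSet_Ioc fun s hs => ?_
    rw [hgid t ht s hs, mul_assoc]
  · intro t ht
    have := abel_main hβ hβ1 hgc hMc hK t ht.1 hMI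
    have e : ∫ s in Set.Ioc 0 t, (t - s) ^ β * (k * Mar β g s)
        = k * ∫ s in Set.Ioc 0 t, (t - s) ^ β * Mar β g s := by
      rw [← integral_const_mul]
      congr 1; ext s; ring
    rw [e, this, setIntegral_congr_fun measurableSet_Ioc (hgid t ht), hk]
    field_simp
end

section
/- Let H ∈ (1/2, 1), T > 0, and let ξ : [0,T] → ℝ be Hölder continuous with some exponent α ∈ (2H − 1, 1] and satisfy ξ(0) = 0. Set c₁ := 1/(2H Γ(3/2 − H) Γ(H + 1/2)) and μ(t) := c₁ ∫₀^t (t − s)^{1/2−H} s^{1/2−H} ξ(s) ds for t ∈ [0,T]. Then μ is absolutely continuous, and there exists a function ψ : [0,T] → ℝ that is Hölder continuous with exponent α + 1 − 2H such that the derivative μ′ of μ satisfies μ′(t) = c₁ ξ(t) + ψ(t) for almost every t ∈ [0,T]. -/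
open MeasureTheory Real

section
open Set

/-- dominating weight -/
noncomputable def Wt (β l h u : ℝ) : ℝ := if u ≤ h then u ^ (l - β - 1) else h ^ l * u ^ (-β - 1)

lemma Wt_int {β l h : ℝ} (hβ : 0 < β) (hl : β < l) (hh : 0 < h) :
    IntegrableOn (Wt β l h) (Ioi 0) ∧
    ∫ u in Ioi 0, Wt β l h u = (1 / (l - β) + 1 / β) * h ^ (l - β) := by
  have hs : Ioi (0:ℝ) = Ioc 0 h ∪ Ioi h := (Ioc_union_Ioi_eq_Ioi hh.le).symm
  have e1 : EqOn (fun u : ℝ => u ^ (l - β - 1)) (Wt β l h) (Ioc 0 h) := by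
    intro u hu; simp [Wt, hu.2]
  have e2 : EqOn (fun u : ℝ => h ^ l * u ^ (-β - 1)) (Wt β l h) (Ioi h) := by
    intro u hu; simp [Wt, not_le.2 (mem_Ioi.1 hu)]
  have i1 : IntegrableOn (fun u : ℝ => u ^ (l - β - 1)) (Ioc 0 h) := by
    have := intervalIntegral.intervalIntegrable_rpow' (a := 0) (b := h) (r := l - β - 1) (by linarith)
    exact (intervalIntegrable_iff_integrableOn_Ioc_of_le hh.le).1 this
  have i2 : IntegrableOn (fun u : ℝ => h ^ l * u ^ (-β - 1)) (Ioi h) :=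
    (integrableOn_Ioi_rpow_of_lt (by linarith) hh).const_mul _
  have j1 := i1.congr_fun e1 measurableSet_Ioc
  have j2 := i2.congr_fun e2 measurableSet_Ioi
  refine ⟨by rw [hs]; exact j1.union j2, ?_⟩
  rw [hs, setIntegral_union (Ioc_disjoint_Ioi le_rfl) measurableSet_Ioi j1 j2,
    ← setIntegral_congr_fun measurableSet_Ioc e1, ← setIntegral_congr_fun measurableSet_Ioi e2,
    ← intervalIntegral.integral_of_le hh.le, integral_rpow (Or.inl (by linarith)),
    integral_const_mul, integral_Ioi_rpow_of_lt (by linarith) hh]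
  have h1 : l - β - 1 + 1 = l - β := by ring
  have h2 : -β - 1 + 1 = -β := by ring
  rw [h1, h2, zero_rpow (by linarith), rpow_sub hh, rpow_neg hh.le]
  have : l - β ≠ 0 := by linarith
  have := (rpow_pos_of_pos hh β).ne'
  field_simp
  ring

lemma Wt_nonneg {β l h u : ℝ} (hh : 0 < h) (hu : 0 < u) : 0 ≤ Wt β l h u := by
  unfold Wt; split_ifs <;> positivity

lemma Wt_bound {β l h u A x : ℝ} (hu : 0 < u)
    (h1 : |x| ≤ A * u ^ l) (h2 : |x| ≤ A * h ^ l) :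
    |u ^ (-β - 1) * x| ≤ A * Wt β l h u := by
  rw [abs_mul, abs_of_pos (rpow_pos_of_pos hu _)]
  have hp := rpow_pos_of_pos hu (-β - 1)
  unfold Wt; split_ifs with h'
  · have : u ^ (l - β - 1) = u ^ (-β - 1) * u ^ l := by rw [← rpow_add hu]; ring_nf
    rw [this]; nlinarith
  · nlinarith

/-- Marchaud derivative -/
noncomputable def Gm (β : ℝ) (f : ℝ → ℝ) (t : ℝ) : ℝ :=
  β * ∫ u in Ioi (0:ℝ), u ^ (-β - 1) * (f t - f (t - u))

lemma meas_k (β : ℝ) : Measurable (fun u : ℝ => u ^ (-β - 1)) := by fun_prop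

lemma Gm_int {β l K M : ℝ} {f : ℝ → ℝ}
    (hK : ∀ x y, |f x - f y| ≤ K * |x - y| ^ l) (hM : ∀ x, |f x| ≤ M) (t u : ℝ) (hu : 0 < u) :
    |u ^ (-β - 1) * (f t - f (t - u))| ≤ max K (2 * M) * Wt β l 1 u := by
  apply Wt_bound hu
  · refine (hK _ _).trans ?_
    rw [sub_sub_cancel, abs_of_pos hu]
    gcongr; exact le_max_left _ _
  · rw [one_rpow, mul_one]
    refine (abs_sub _ _).trans (le_trans ?_ (le_max_right _ _))
    linarith [hM t, hM (t - u)]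

lemma Gm_integrable {β l K M : ℝ} {f : ℝ → ℝ} (hβ : 0 < β) (hl : β < l) (hf : Continuous f)
    (hK : ∀ x y, |f x - f y| ≤ K * |x - y| ^ l) (hM : ∀ x, |f x| ≤ M) (t : ℝ) :
    IntegrableOn (fun u : ℝ => u ^ (-β - 1) * (f t - f (t - u))) (Ioi 0) := by
  refine Integrable.mono' ((Wt_int hβ hl one_pos).1.const_mul (max K (2 * M))) ?_ ?_
  · exact ((meas_k β).mul (by fun_prop)).aestronglyMeasurable
  · filter_upwards [ae_restrict_mem measurableSet_Ioi] with u hu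
    exact Gm_int hK hM t u hu

lemma Gm_holder {β l K M : ℝ} {f : ℝ → ℝ} (hβ : 0 < β) (hl : β < l) (hf : Continuous f)
    (hK : ∀ x y, |f x - f y| ≤ K * |x - y| ^ l) (hM : ∀ x, |f x| ≤ M) (s t : ℝ) :
    |Gm β f t - Gm β f s| ≤ β * (2 * K * (1 / (l - β) + 1 / β)) * |t - s| ^ (l - β) := by
  rcases eq_or_ne t s with rfl | hne
  · simp [zero_rpow (sub_pos.2 hl).ne']
  have hh : 0 < |t - s| := abs_pos.2 (sub_ne_zero.2 hne)
  obtain ⟨hi, he⟩ := Wt_int hβ hl hh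
  unfold Gm
  rw [← mul_sub, ← integral_sub (Gm_integrable hβ hl hf hK hM t) (Gm_integrable hβ hl hf hK hM s),
    abs_mul, abs_of_pos hβ, mul_assoc]
  refine mul_le_mul_of_nonneg_left ?_ hβ.le
  rw [mul_assoc, ← he, ← integral_const_mul]
  rw [← Real.norm_eq_abs]
  refine norm_integral_le_of_norm_le (G := ℝ) (hi.const_mul (2 * K)) ?_
  filter_upwards [ae_restrict_mem measurableSet_Ioi] with u hu
  have hu : 0 < u := hu
  rw [← mul_sub]
  apply Wt_bound hu
  · have a := hK t (t - u)
    have b := hK s (s - u)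
    rw [sub_sub_cancel, abs_of_pos hu] at a b
    have := abs_sub (f t - f (t - u)) (f s - f (s - u))
    linarith
  · have a := hK t s
    have b := hK (t - u) (s - u)
    rw [sub_sub_sub_cancel_right] at b
    have := abs_sub (f t - f s) (f (t - u) - f (s - u))
    have e : f t - f (t - u) - (f s - f (s - u)) = f t - f s - (f (t - u) - f (s - u)) := by ring
    rw [e]; linarith

lemma Gm_ac {β l K M : ℝ} {f : ℝ → ℝ} (hβ : 0 < β) (hβ1 : β < 1) (hl : β < l) (hf : Continuous f)
    (hK : ∀ x y, |f x - f y| ≤ K * |x - y| ^ l) (hM : ∀ x, |f x| ≤ M)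
    (h0 : ∀ x ≤ 0, f x = 0) (t : ℝ) (ht : 0 ≤ t) :
    ∫ r in Ioc 0 t, Gm β f r = ∫ s in Ioc 0 t, (t - s) ^ (-β) * f s := by
  have hprod : Integrable (Function.uncurry fun r u : ℝ => u ^ (-β - 1) * (f r - f (r - u)))
      ((volume.restrict (Ioc 0 t)).prod (volume.restrict (Ioi (0:ℝ)))) := by
    refine Integrable.mono' (((Wt_int hβ hl one_pos).1.const_mul (max K (2 * M))).comp_snd
      (volume.restrict (Ioc 0 t))) ?_ ?_
    · exact (((meas_k β).comp measurable_snd).mul (by fun_prop)).aestronglyMeasurable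
    · rw [Measure.prod_restrict]
      filter_upwards [ae_restrict_mem (measurableSet_Ioc.prod measurableSet_Ioi)] with p hp
      exact Gm_int hK hM p.1 p.2 hp.2
  set Φ : ℝ → ℝ := fun x => ∫ y in (0:ℝ)..x, f y with hΦ
  have hΦd : ∀ x, HasDerivAt Φ (f x) x := fun x => (hf.integral_hasStrictDerivAt 0 x).hasDerivAt
  have hΦ0 : ∀ x ≤ 0, Φ x = 0 := by
    intro x hx
    simp only [hΦ]
    apply intervalIntegral.integral_zero_ae
    refine Filter.Eventually.of_forall fun y hy => h0 y ?_
    rw [uIoc_of_ge hx] at hy; exact hy.2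
  have hinner : ∀ u > 0, ∫ r in Ioc 0 t, u ^ (-β - 1) * (f r - f (r - u)) =
      u ^ (-β - 1) * (Φ t - Φ (t - u)) := by
    intro u hu
    rw [integral_const_mul, ← intervalIntegral.integral_of_le ht,
      intervalIntegral.integral_sub (hf.intervalIntegrable _ _)
        (Continuous.intervalIntegrable (u := fun x => f (x - u)) (by fun_prop) _ _),
      intervalIntegral.integral_comp_sub_right (fun x => f x) u]
    have : ∫ x in (0 - u)..(t - u), f x = Φ (t - u) - Φ (0 - u) := by
      simp only [hΦ]
      rw [intervalIntegral.integral_interval_sub_left] <;> exact hf.intervalIntegrable _ _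
    rw [this, hΦ0 (0 - u) (by linarith), sub_zero]
  have hA : IntegrableOn (fun u : ℝ => u ^ (-β - 1) * (Φ t - Φ (t - u))) (Ioi 0) := by
    have := hprod.integral_prod_right
    refine Integrable.congr this ?_
    filter_upwards [ae_restrict_mem measurableSet_Ioi] with u hu
    exact hinner u hu
  have hGA : ∫ r in Ioc 0 t, Gm β f r = β * ∫ u in Ioi 0, u ^ (-β - 1) * (Φ t - Φ (t - u)) := by
    unfold Gm
    rw [integral_const_mul, integral_integral_swap hprod]
    congr 1
    exact setIntegral_congr_fun measurableSet_Ioi fun u hu => hinner u hu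
  have hB1 : IntegrableOn (fun u : ℝ => u ^ (-β) * f (t - u)) (Ioc 0 t) := by
    have := intervalIntegral.intervalIntegrable_rpow' (a := 0) (b := t) (r := -β) (by linarith)
    have := (intervalIntegrable_iff_integrableOn_Ioc_of_le ht).1 this
    refine Integrable.mul_bdd (c := M) this ?_ ?_
    · exact (hf.comp (continuous_const.sub continuous_id)).aestronglyMeasurable
    · exact Filter.Eventually.of_forall fun u => hM _
  have hBz : EqOn (fun _ : ℝ => (0:ℝ)) (fun u : ℝ => u ^ (-β) * f (t - u)) (Ioi t) := by
    intro u hu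
    have hu : t < u := hu
    simp [h0 (t - u) (by linarith)]
  have hB2 : IntegrableOn (fun u : ℝ => u ^ (-β) * f (t - u)) (Ioi t) :=
    integrableOn_zero.congr_fun hBz measurableSet_Ioi
  have hs : Ioi (0:ℝ) = Ioc 0 t ∪ Ioi t := (Ioc_union_Ioi_eq_Ioi ht).symm
  have hB : IntegrableOn (fun u : ℝ => u ^ (-β) * f (t - u)) (Ioi 0) := by
    rw [hs]; exact hB1.union hB2
  have hBe : ∫ u in Ioi 0, u ^ (-β) * f (t - u) = ∫ s in Ioc 0 t, (t - s) ^ (-β) * f s := by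
    rw [hs, setIntegral_union (Ioc_disjoint_Ioi le_rfl) measurableSet_Ioi hB1 hB2,
      ← setIntegral_congr_fun measurableSet_Ioi hBz]
    simp only [integral_zero, add_zero]
    rw [← intervalIntegral.integral_of_le ht, ← intervalIntegral.integral_of_le ht]
    have := intervalIntegral.integral_comp_sub_left (a := 0) (b := t)
      (fun s => (t - s) ^ (-β) * f s) t
    simpa using this
  have hder : ∀ u ∈ Ioi (0:ℝ), HasDerivAt (fun u : ℝ => -(u ^ (-β)) * (Φ t - Φ (t - u)))
      (β * (u ^ (-β - 1) * (Φ t - Φ (t - u))) - u ^ (-β) * f (t - u)) u := by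
    intro u hu
    have hu : 0 < u := hu
    have d1 := (Real.hasDerivAt_rpow_const (x := u) (p := -β) (Or.inl hu.ne')).neg
    have d2 : HasDerivAt (fun u : ℝ => Φ (t - u)) (f (t - u) * (-1)) u :=
      (hΦd (t - u)).comp u ((hasDerivAt_id u).const_sub t)
    have d3 := d1.mul (d2.const_sub (Φ t))
    refine HasDerivAt.congr_deriv d3 ?_
    simp only [Pi.neg_apply]
    ring
  have hΦM : ∀ x y, |Φ x - Φ y| ≤ M * |x - y| := by
    intro x y
    have : Φ x - Φ y = ∫ z in y..x, f z := by
      simp only [hΦ]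
      rw [intervalIntegral.integral_interval_sub_left] <;> exact hf.intervalIntegrable _ _
    rw [this]
    rw [← Real.norm_eq_abs]
    exact intervalIntegral.norm_integral_le_of_norm_le_const (f := f) fun z _ => hM z
  have hcont : ContinuousWithinAt (fun u : ℝ => -(u ^ (-β)) * (Φ t - Φ (t - u))) (Ici 0) 0 := by
    unfold ContinuousWithinAt
    simp only [sub_zero, sub_self, mul_zero]
    have hlim : Filter.Tendsto (fun u : ℝ => M * u ^ (1 - β)) (nhdsWithin 0 (Ici 0)) (nhds 0) := by
      have : ContinuousAt (fun u : ℝ => M * u ^ (1 - β)) 0 :=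
        continuousAt_const.mul (Real.continuousAt_rpow_const _ _ (Or.inr (by linarith)))
      have := this.tendsto
      simp only [zero_rpow (sub_pos.2 hβ1).ne', mul_zero] at this
      exact this.mono_left nhdsWithin_le_nhds
    refine squeeze_zero_norm' ?_ hlim
    filter_upwards [self_mem_nhdsWithin] with u hu
    have hu : 0 ≤ u := hu
    rcases hu.eq_or_lt with rfl | hu
    · simp [zero_rpow (sub_pos.2 hβ1).ne']
    have := hΦM t (t - u)
    rw [sub_sub_cancel, abs_of_pos hu] at this
    rw [norm_mul, norm_neg, Real.norm_of_nonneg (rpow_nonneg hu.le _), Real.norm_eq_abs]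
    have e : u ^ (1 - β) = u ^ (-β) * u := by
      rw [← rpow_add_one hu.ne']; ring_nf
    rw [e]
    have := mul_le_mul_of_nonneg_left this (rpow_nonneg hu.le (-β))
    linarith
  have htop : Filter.Tendsto (fun u : ℝ => -(u ^ (-β)) * (Φ t - Φ (t - u))) Filter.atTop
      (nhds 0) := by
    have : Filter.Tendsto (fun u : ℝ => -(u ^ (-β)) * Φ t) Filter.atTop (nhds 0) := by
      have := ((tendsto_rpow_neg_atTop hβ).neg).mul_const (Φ t)
      simpa using this
    refine this.congr' ?_
    filter_upwards [Filter.eventually_ge_atTop t] with u hu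
    rw [hΦ0 (t - u) (by linarith), sub_zero]
  have key := integral_Ioi_of_hasDerivAt_of_tendsto hcont hder ((hA.const_mul β).sub hB) htop
  rw [integral_sub (hA.const_mul β) hB, integral_const_mul, hBe, ← hGA] at key
  simp only [sub_zero, sub_self, mul_zero] at key
  linarith

lemma f_holder_aux {β α c s t x y : ℝ} (hβ : 0 < β) (hβ1 : β < 1) (hα : β < α) (hα1 : α ≤ 1)
    (hc : 0 ≤ c) (hs : 0 ≤ s) (hst : s < t) (hy : |y| ≤ c * s ^ α) (hxy : |x - y| ≤ c * (t - s) ^ α) :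
    |t ^ (-β) * x - s ^ (-β) * y| ≤ 2 * c * (t - s) ^ (α - β) := by
  have ht : 0 < t := hs.trans_lt hst
  have hh : 0 < t - s := sub_pos.2 hst
  have hth : t - s ≤ t := by linarith
  have e : t ^ (-β) * x - s ^ (-β) * y = t ^ (-β) * (x - y) + (t ^ (-β) - s ^ (-β)) * y := by ring
  have b1 : |t ^ (-β) * (x - y)| ≤ c * (t - s) ^ (α - β) := by
    rw [abs_mul, abs_of_pos (rpow_pos_of_pos ht _)]
    calc t ^ (-β) * |x - y| ≤ (t - s) ^ (-β) * (c * (t - s) ^ α) := by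
          apply mul_le_mul _ hxy (abs_nonneg _) (by positivity)
          exact rpow_le_rpow_of_nonpos hh hth (by linarith)
      _ = c * (t - s) ^ (α - β) := by
          rw [sub_eq_add_neg α β, rpow_add hh]; ring
  have b2 : |(t ^ (-β) - s ^ (-β)) * y| ≤ c * (t - s) ^ (α - β) := by
    rcases hs.eq_or_lt with rfl | hs
    · have : y = 0 := by
        rw [zero_rpow (by linarith), mul_zero] at hy
        exact abs_eq_zero.1 (le_antisymm hy (abs_nonneg _))
      rw [this]; simp only [mul_zero, abs_zero]; positivity
    have q : s / t ≤ (s / t) ^ β := by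
      have := rpow_le_rpow_of_exponent_ge (x := s / t) (by positivity)
        ((div_le_one ht).2 hst.le) hβ1.le
      simpa using this
    have q2 : t ^ (-β) = s ^ (-β) * (s / t) ^ β := by
      rw [div_rpow hs.le ht.le, rpow_neg hs.le, rpow_neg ht.le]
      have := (rpow_pos_of_pos hs β).ne'
      field_simp
    have q3 : |t ^ (-β) - s ^ (-β)| ≤ s ^ (-β) * ((t - s) / t) := by
      have mono := rpow_le_rpow_of_nonpos hs hst.le (neg_nonpos.2 hβ.le)
      rw [abs_sub_comm, abs_of_nonneg (sub_nonneg.2 mono), q2]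
      have : (t - s) / t = 1 - s / t := by field_simp
      rw [this]
      have := rpow_pos_of_pos hs (-β)
      nlinarith
    rw [abs_mul]
    calc |t ^ (-β) - s ^ (-β)| * |y| ≤ (s ^ (-β) * ((t - s) / t)) * (c * s ^ α) := by gcongr
      _ = c * (s ^ (α - β) * ((t - s) / t)) := by
          rw [sub_eq_add_neg α β, rpow_add hs]; ring
      _ ≤ c * (t ^ (α - β) * ((t - s) / t)) := by gcongr
      _ = c * (t ^ (α - β - 1) * (t - s)) := by
          rw [rpow_sub_one ht.ne']; ring
      _ ≤ c * ((t - s) ^ (α - β - 1) * (t - s)) := by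
          have := rpow_le_rpow_of_nonpos (z := α - β - 1) hh hth (by linarith)
          gcongr
      _ = c * (t - s) ^ (α - β) := by
          rw [rpow_sub_one hh.ne']; field_simp
  rw [e]
  have := abs_add_le (t ^ (-β) * (x - y)) ((t ^ (-β) - s ^ (-β)) * y)
  linarith

end

lemma clamp_abs (T x y : ℝ) : |max 0 (min x T) - max 0 (min y T)| ≤ |x - y| := by
  refine (abs_max_sub_max_le_max _ _ _ _).trans ?_
  simp only [sub_self, abs_zero]
  refine max_le (abs_nonneg _) ((abs_min_sub_min_le_max _ _ _ _).trans ?_)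
  simp

/-- `μ` is absolutely continuous on `[0,T]` with derivative `μ′ = c₁ ξ + ψ` a.e., where
`ψ` is Hölder continuous with exponent `α + 1 − 2H`. -/
theorem mu_derivative_large_hurst
    (H T : ℝ) (hH : H ∈ Set.Ioo (1 / 2 : ℝ) 1) (hT : 0 < T)
    (ξ : ℝ → ℝ) (α : ℝ) (hα : α ∈ Set.Ioc (2 * H - 1) 1)
    (c : ℝ) (hc : 0 ≤ c)
    (hξHolder : ∀ s ∈ Set.Icc (0 : ℝ) T, ∀ t ∈ Set.Icc (0 : ℝ) T,
      |ξ t - ξ s| ≤ c * |t - s| ^ α)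
    (hξ0 : ξ 0 = 0) :
    ∃ μ' : ℝ → ℝ, IntegrableOn μ' (Set.Icc (0 : ℝ) T) volume ∧
      (∀ t ∈ Set.Icc (0 : ℝ) T, μfn H ξ t = μfn H ξ 0 + ∫ s in Set.Ioc (0 : ℝ) t, μ' s) ∧
      ∃ ψ : ℝ → ℝ,
        (∃ c' : ℝ, 0 ≤ c' ∧ ∀ s ∈ Set.Icc (0 : ℝ) T, ∀ t ∈ Set.Icc (0 : ℝ) T,
          |ψ t - ψ s| ≤ c' * |t - s| ^ (α + 1 - 2 * H)) ∧
        ∀ᵐ t ∂(volume.restrict (Set.Icc (0 : ℝ) T)), μ' t = c₁ H * ξ t + ψ t := by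
  obtain ⟨hH1, hH2⟩ := hH
  obtain ⟨hα1, hα2⟩ := hα
  set β : ℝ := H - 1 / 2 with hβdef
  have hβ : 0 < β := by linarith
  have hβ1 : β < 1 := by linarith
  have hαβ : β < α := by linarith
  have hl : β < α - β := by linarith
  have hexp : (1 / 2 - H : ℝ) = -β := by rw [hβdef]; ring
  have hexp2 : α + 1 - 2 * H = α - β - β := by rw [hβdef]; ring
  set p : ℝ → ℝ := fun s => max 0 (min s T) with hp
  have hpm : ∀ s, p s ∈ Set.Icc (0 : ℝ) T := fun s =>
    ⟨le_max_left _ _, max_le hT.le (min_le_right _ _)⟩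
  have hpe : ∀ s ∈ Set.Icc (0 : ℝ) T, p s = s := by
    intro s hs
    simp only [hp]
    rw [min_eq_left hs.2, max_eq_right hs.1]
  have hp0 : ∀ s ≤ 0, p s = 0 := by
    intro s hs
    simp only [hp]
    exact max_eq_left ((min_le_left _ _).trans hs)
  set f : ℝ → ℝ := fun s => p s ^ (-β) * ξ (p s) with hfdef
  have aux : ∀ s ∈ Set.Icc (0 : ℝ) T, ∀ t ∈ Set.Icc (0 : ℝ) T, s < t →
      |t ^ (-β) * ξ t - s ^ (-β) * ξ s| ≤ 2 * c * (t - s) ^ (α - β) := by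
    intro s hs t ht hst
    refine f_holder_aux hβ hβ1 hαβ hα2 hc hs.1 hst ?_ ?_
    · have := hξHolder 0 ⟨le_rfl, hT.le⟩ s hs
      rwa [hξ0, sub_zero, sub_zero, abs_of_nonneg hs.1] at this
    · have := hξHolder s hs t ht
      rwa [abs_of_pos (sub_pos.2 hst)] at this
  have aux2 : ∀ s ∈ Set.Icc (0 : ℝ) T, ∀ t ∈ Set.Icc (0 : ℝ) T,
      |t ^ (-β) * ξ t - s ^ (-β) * ξ s| ≤ 2 * c * |t - s| ^ (α - β) := by
    intro s hs t ht
    rcases lt_trichotomy s t with h | h | h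
    · rw [abs_of_pos (sub_pos.2 h)]; exact aux s hs t ht h
    · subst h
      simp only [sub_self, abs_zero]
      positivity
    · rw [abs_sub_comm, abs_sub_comm t s, abs_of_pos (sub_pos.2 h)]; exact aux t ht s hs h
  have hK : ∀ x y, |f x - f y| ≤ (2 * c) * |x - y| ^ (α - β) := by
    intro x y
    refine (aux2 (p y) (hpm y) (p x) (hpm x)).trans ?_
    have := clamp_abs T x y
    have := rpow_le_rpow (abs_nonneg _) this (z := α - β) (by linarith)
    have := mul_le_mul_of_nonneg_left this (mul_nonneg zero_le_two hc)
    exact this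
  have h0 : ∀ x ≤ 0, f x = 0 := by
    intro x hx
    simp only [hfdef]
    rw [hp0 x hx, hξ0, mul_zero]
  have hM : ∀ x, |f x| ≤ 2 * c * T ^ (α - β) := by
    intro x
    have := aux2 0 ⟨le_rfl, hT.le⟩ (p x) (hpm x)
    rw [hξ0, mul_zero, sub_zero, sub_zero, abs_of_nonneg (hpm x).1] at this
    refine this.trans (mul_le_mul_of_nonneg_left ?_ (mul_nonneg zero_le_two hc))
    exact rpow_le_rpow (hpm x).1 (hpm x).2 (by linarith)
  have hf : Continuous f := by
    rw [continuous_iff_continuousAt]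
    intro x
    rw [ContinuousAt, tendsto_iff_dist_tendsto_zero]
    have hlim : Filter.Tendsto (fun y : ℝ => (2 * c) * |y - x| ^ (α - β)) (nhds x) (nhds 0) := by
      have : Continuous (fun y : ℝ => (2 * c) * |y - x| ^ (α - β)) :=
        continuous_const.mul ((Real.continuous_rpow_const (by linarith)).comp (by fun_prop))
      have := this.tendsto x
      simpa [zero_rpow (show α - β ≠ 0 by linarith)] using this
    exact squeeze_zero (fun _ => dist_nonneg) (fun y => by rw [Real.dist_eq]; exact hK y x) hlim
  have hGh := Gm_holder hβ hl hf hK hM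
  have hGc : Continuous (Gm β f) := by
    rw [continuous_iff_continuousAt]
    intro x
    rw [ContinuousAt, tendsto_iff_dist_tendsto_zero]
    set D := β * (2 * (2 * c) * (1 / (α - β - β) + 1 / β))
    have hlim : Filter.Tendsto (fun y : ℝ => D * |y - x| ^ (α - β - β)) (nhds x) (nhds 0) := by
      have : Continuous (fun y : ℝ => D * |y - x| ^ (α - β - β)) :=
        continuous_const.mul ((Real.continuous_rpow_const (by linarith)).comp (by fun_prop))
      have := this.tendsto x
      simpa [zero_rpow (show α - β - β ≠ 0 by linarith)] using this
    exact squeeze_zero (fun _ => dist_nonneg) (fun y => by rw [Real.dist_eq]; exact hGh x y) hlim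
  refine ⟨fun t => c₁ H * Gm β f t, (continuous_const.mul hGc).integrableOn_Icc, ?_,
    fun t => c₁ H * Gm β f t - c₁ H * ξ t, ?_, ?_⟩
  · intro t ht
    rw [integral_const_mul, Gm_ac hβ hβ1 hl hf hK hM h0 t ht.1]
    unfold μfn
    simp only [Set.Ioc_self, Measure.restrict_empty, integral_zero_measure, mul_zero, zero_add]
    congr 1
    refine setIntegral_congr_fun measurableSet_Ioc fun s hs => ?_
    simp only [hfdef]
    rw [hpe s ⟨hs.1.le, hs.2.trans ht.2⟩, hexp]
    ring
  · have hγ : 0 < α - β - β := by linarith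
    have hDnn : 0 ≤ β * (2 * (2 * c) * (1 / (α - β - β) + 1 / β)) := by positivity
    refine ⟨|c₁ H| * (β * (2 * (2 * c) * (1 / (α - β - β) + 1 / β)) + c * T ^ (2 * β)),
      by positivity, ?_⟩
    intro s hs t ht
    rw [hexp2]
    have e : c₁ H * Gm β f t - c₁ H * ξ t - (c₁ H * Gm β f s - c₁ H * ξ s) =
      c₁ H * ((Gm β f t - Gm β f s) - (ξ t - ξ s)) := by ring
    rw [e, abs_mul, mul_assoc]
    refine mul_le_mul_of_nonneg_left ?_ (abs_nonneg _)
    refine (abs_sub _ _).trans ?_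
    rw [add_mul]
    refine add_le_add (hGh s t) ((hξHolder s hs t ht).trans ?_)
    rw [mul_assoc]
    refine mul_le_mul_of_nonneg_left ?_ hc
    have hle : |t - s| ≤ T := abs_le.2 ⟨by linarith [ht.1, hs.2], by linarith [ht.2, hs.1]⟩
    have e2 : α = 2 * β + (α - β - β) := by ring
    calc |t - s| ^ α = |t - s| ^ (2 * β) * |t - s| ^ (α - β - β) := by
          rw [← rpow_add_of_nonneg (abs_nonneg _) (by linarith) hγ.le, ← e2]
      _ ≤ T ^ (2 * β) * |t - s| ^ (α - β - β) := by gcongr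
  · exact Filter.Eventually.of_forall fun t => by ring
end
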